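/- For T > 0 and E ∈ ℝ with small negative imaginary part (Im E < 0), the sum over η = (π/T)(2k+1), k ∈ ℤ, of e^{-iηt}/(η - E) equals -iT e^{-iEt}/(1 + e^{-iET}) for 0 < t < T. -/

import Mathlib

/-!
Up to a factor independent of `k`, the summand is the Fourier term at `t` of
`φ s = exp (i(π/T - E)s)` on `[0, T]`:
`∫₀ᵀ exp (i(η_k - E)s) ds = i(1 + exp (-iET)) / (η_k - E)`, since `exp (iη_k T) = -1`. The claim is
thus pointwise convergence of the symmetric Fourier partial sums of `φ` at an interior point `t`
(`tendsto_fourier_partial_sum`).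

The coefficients are not absolutely summable, because `φ` jumps at the endpoints when it is
extended periodically, so convergence is obtained by Chernoff's argument. Write
`φ s - φ t = (exp (2πi(s - t)/T) - 1) h s` with `h` continuous on `[0, T]` (`exists_quotient`). Then
the Fourier terms of `φ - φ t` at `t` are differences of consecutive Fourier terms of `h`, the
partial sums telescope, and the two remaining boundary terms vanish in the limit by the
Riemann–Lebesgue lemma (`tendsto_integral_osc`).
-/

open Real Filter

noncomputable section

/-- The anti-periodic Matsubara frequency η_k = (π/T)(2k+1). -/
def eta (T : ℝ) (k : ℤ) : ℝ := (π / T) * (2 * (k : ℝ) + 1)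

/-- The oscillation `s ↦ exp (2πik(s - t)/T)`, the `k`-th character of `ℝ / Tℤ` normalised to be
`1` at `s = t`. -/
def osc (T t : ℝ) (k : ℤ) (s : ℝ) : ℂ :=
  Complex.exp (k * (2 * π * Complex.I / T * (s - t)))

lemma osc_continuous (T t : ℝ) (k : ℤ) : Continuous (osc T t k) := by
  unfold osc; fun_prop

lemma osc_succ (T t : ℝ) (k : ℤ) (s : ℝ) : osc T t (k + 1) s = osc T t k s * osc T t 1 s := by
  unfold osc
  rw [← Complex.exp_add]
  push_cast
  ring_nf

lemma osc_one_ne_one {T t s : ℝ} (hT : 0 < T) (ht : t ∈ Set.Ioo 0 T) (hs : s ∈ Set.Icc 0 T)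
    (hst : s ≠ t) : osc T t 1 s ≠ 1 := by
  intro h
  obtain ⟨n, hn⟩ := Complex.exp_eq_one_iff.1 h
  have hTc : (T : ℂ) ≠ 0 := by exact_mod_cast hT.ne'
  have h1 : ((s - t : ℝ) : ℂ) = ((n * T : ℝ) : ℂ) := by
    have h2 : (2 * π * Complex.I : ℂ) ≠ 0 := Complex.two_pi_I_ne_zero
    apply mul_left_cancel₀ h2
    push_cast at hn ⊢
    field_simp at hn
    linear_combination (2 * π * Complex.I) * hn
  have h3 : s - t = n * T := by exact_mod_cast h1
  have hn0 : n ≠ 0 := by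
    rintro rfl
    apply hst
    simp at h3
    linarith
  obtain ⟨hs0, hs1⟩ := hs
  obtain ⟨ht0, ht1⟩ := ht
  rcases lt_or_gt_of_ne hn0 with hneg | hpos
  · have : (n : ℝ) ≤ -1 := by exact_mod_cast Int.le_sub_one_of_lt hneg
    nlinarith
  · have : (1 : ℝ) ≤ n := by exact_mod_cast hpos
    nlinarith

/-- The difference quotient that makes the Dirichlet sums telescope: `φ s - φ t` is divisible by
`osc T t 1 s - 1` with continuous quotient, because `t` is interior and so is the only zero of the
divisor in `[0, T]`, where it is simple. -/
lemma exists_quotient {T t : ℝ} (hT : 0 < T) (ht : t ∈ Set.Ioo 0 T) {φ : ℝ → ℂ}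
    (hφ : Differentiable ℝ φ) :
    ∃ h : ℝ → ℂ, ContinuousOn h (Set.Icc 0 T) ∧
      ∀ s ∈ Set.Icc 0 T, φ s - φ t = (osc T t 1 s - 1) * h s := by
  have hder : HasDerivAt (osc T t 1) (2 * π * Complex.I / T) t := by
    have h1 : HasDerivAt (fun z : ℂ => Complex.exp (((1 : ℤ) : ℂ) *
        (2 * π * Complex.I / T * (z - t)))) (2 * π * Complex.I / T) (t : ℂ) := by
      have := ((((hasDerivAt_id (t : ℂ)).sub_const (t : ℂ)).const_mul
        (2 * π * Complex.I / T : ℂ)).const_mul ((1 : ℤ) : ℂ)).cexp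
      simpa using this
    exact h1.comp_ofReal
  have hdiff : Differentiable ℝ (osc T t 1) := by
    intro s
    unfold osc
    fun_prop
  have hcont : ∀ {f : ℝ → ℂ}, Differentiable ℝ f → Continuous (dslope f t) := by
    intro f hf
    rw [← continuousOn_univ]
    exact (continuousOn_dslope univ_mem).2 ⟨hf.continuous.continuousOn, hf t⟩
  have hone : osc T t 1 t = 1 := by simp [osc]
  have hne : ∀ s ∈ Set.Icc 0 T, dslope (osc T t 1) t s ≠ 0 := by
    intro s hs
    by_cases hst : s = t
    · subst hst
      rw [dslope_same, hder.deriv]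
      exact div_ne_zero Complex.two_pi_I_ne_zero (by exact_mod_cast hT.ne')
    · intro h0
      have := sub_smul_dslope (osc T t 1) t s
      rw [h0, hone, smul_zero] at this
      exact osc_one_ne_one hT ht hs hst (sub_eq_zero.1 this.symm)
  refine ⟨fun s => dslope φ t s / dslope (osc T t 1) t s,
    (hcont hφ).continuousOn.div (hcont hdiff).continuousOn hne, fun s hs => ?_⟩
  have h1 := sub_smul_dslope (osc T t 1) t s
  rw [hone] at h1
  rw [← sub_smul_dslope φ t s, ← h1, smul_mul_assoc, mul_div_cancel₀ _ (hne s hs)]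

lemma sum_Icc_telescope (A : ℤ → ℂ) (N : ℕ) :
    ∑ k ∈ Finset.Icc (-(N : ℤ)) N, (A (k + 1) - A k) = A (N + 1) - A (-N) := by
  induction N with
  | zero => simp
  | succ n ih =>
    rw [Nat.cast_add, Nat.cast_one, Finset.Icc_succ_succ, Finset.sum_union (by simp),
      Finset.sum_pair (by lia), ih]
    have : -((n : ℤ) + 1) + 1 = -n := by ring
    rw [this]
    ring

/-- The Riemann–Lebesgue lemma along integer frequencies. -/
lemma tendsto_integral_osc {T : ℝ} (hT : 0 < T) (t : ℝ) (h : ℝ → ℂ) {m : ℕ → ℤ}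
    (hm : Tendsto (fun N => (m N : ℝ)) atTop (Filter.cocompact ℝ)) :
    Tendsto (fun N => ∫ s in (0 : ℝ)..T, osc T t (m N) s * h s) atTop (nhds 0) := by
  have hw : Tendsto (fun N => (m N : ℝ) * (-T⁻¹)) atTop (Filter.cocompact ℝ) :=
    (Homeomorph.mulRight₀ (-T⁻¹) (by simp [hT.ne'])).isClosedEmbedding.tendsto_cocompact.comp hm
  have key := (Real.tendsto_integral_exp_smul_cocompact
    ((Set.Ioc 0 T).indicator h)).comp hw
  rw [tendsto_zero_iff_norm_tendsto_zero] at key ⊢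
  refine key.congr fun N => ?_
  -- The normalisation at `t` only contributes a unimodular factor.
  have hunit : ‖Complex.exp ((-(2 * π * (m N) * t / T) : ℝ) * Complex.I)‖ = 1 :=
    Complex.norm_exp_ofReal_mul_I _
  rw [intervalIntegral.integral_of_le hT.le,
    ← MeasureTheory.integral_indicator measurableSet_Ioc, Function.comp_apply,
    ← one_mul ‖∫ v : ℝ, _‖, ← hunit, ← norm_mul, ← MeasureTheory.integral_const_mul]
  congr 2
  ext s
  by_cases hs : s ∈ Set.Ioc 0 T
  · simp only [Set.indicator_of_mem hs, Circle.smul_def, Real.fourierChar_apply, smul_eq_mul, osc]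
    rw [← mul_assoc, ← Complex.exp_add]
    congr 2
    push_cast
    ring
  · simp [Set.indicator_of_notMem hs]

lemma integral_osc {T : ℝ} (hT : 0 < T) (t : ℝ) (k : ℤ) :
    ∫ s in (0 : ℝ)..T, osc T t k s = if k = 0 then (T : ℂ) else 0 := by
  have hTc : (T : ℂ) ≠ 0 := by exact_mod_cast hT.ne'
  split_ifs with hk
  · simp [osc, hk]
  · have hkc : (k : ℂ) ≠ 0 := by exact_mod_cast hk
    have hc : (k * (2 * π * Complex.I / T) : ℂ) ≠ 0 :=
      mul_ne_zero hkc (div_ne_zero Complex.two_pi_I_ne_zero hTc)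
    have h1 : ∀ s : ℝ, osc T t k s = Complex.exp (-(k * (2 * π * Complex.I / T) * t)) *
        Complex.exp (k * (2 * π * Complex.I / T) * s) := by
      intro s
      rw [osc, ← Complex.exp_add]
      ring_nf
    have h2 : Complex.exp (k * (2 * π * Complex.I / T) * T) = 1 :=
      Complex.exp_eq_one_iff.2 ⟨k, by field_simp⟩
    simp_rw [h1]
    rw [intervalIntegral.integral_const_mul, integral_exp_mul_complex hc, h2]
    simp

/-- Symmetric Fourier partial sums on `[0, T]` of a differentiable function converge to it at
interior points; no matching of the boundary values is needed. -/
lemma tendsto_fourier_partial_sum {T t : ℝ} (hT : 0 < T) (ht : t ∈ Set.Ioo 0 T) {φ : ℝ → ℂ}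
    (hφ : Differentiable ℝ φ) :
    Tendsto (fun N : ℕ => ∑ k ∈ Finset.Icc (-(N : ℤ)) N,
      ∫ s in (0 : ℝ)..T, osc T t k s * φ s) atTop (nhds (T * φ t)) := by
  obtain ⟨h, hcont, hq⟩ := exists_quotient hT ht hφ
  have hint : ∀ k, IntervalIntegrable (fun s => osc T t k s * h s) MeasureTheory.volume 0 T :=
    fun k => ((osc_continuous T t k).continuousOn.mul
      (by rwa [Set.uIcc_of_le hT.le])).intervalIntegrable
  have hterm : ∀ k, ∫ s in (0 : ℝ)..T, osc T t k s * φ s =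
      (if k = 0 then (T : ℂ) else 0) * φ t +
        ((∫ s in (0 : ℝ)..T, osc T t (k + 1) s * h s) -
          ∫ s in (0 : ℝ)..T, osc T t k s * h s) := by
    intro k
    have hconst : IntervalIntegrable (fun s => osc T t k s * φ t) MeasureTheory.volume 0 T :=
      ((osc_continuous T t k).mul continuous_const).intervalIntegrable _ _
    rw [← integral_osc hT t k, ← intervalIntegral.integral_mul_const,
      ← intervalIntegral.integral_sub (hint _) (hint _),
      ← intervalIntegral.integral_add hconst ((hint _).sub (hint _))]
    refine intervalIntegral.integral_congr fun s hs => ?_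
    rw [Set.uIcc_of_le hT.le] at hs
    have := hq s hs
    simp only [osc_succ]
    linear_combination osc T t k s * this
  have hsum : ∀ N : ℕ, ∑ k ∈ Finset.Icc (-(N : ℤ)) N, ∫ s in (0 : ℝ)..T, osc T t k s * φ s =
      T * φ t + ((∫ s in (0 : ℝ)..T, osc T t ((N : ℤ) + 1) s * h s) -
        ∫ s in (0 : ℝ)..T, osc T t (-(N : ℤ)) s * h s) := by
    intro N
    simp_rw [hterm]
    rw [Finset.sum_add_distrib, ← Finset.sum_mul,
      sum_Icc_telescope (fun k => ∫ s in (0 : ℝ)..T, osc T t k s * h s), Finset.sum_ite_eq']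
    simp
  have hA : Tendsto (fun N : ℕ => (((N : ℤ) + 1 : ℤ) : ℝ)) atTop (Filter.cocompact ℝ) := by
    refine Tendsto.mono_right ?_ atTop_le_cocompact
    push_cast
    exact tendsto_atTop_add_const_right _ _ tendsto_natCast_atTop_atTop
  have hB : Tendsto (fun N : ℕ => ((-(N : ℤ) : ℤ) : ℝ)) atTop (Filter.cocompact ℝ) := by
    refine Tendsto.mono_right ?_ atBot_le_cocompact
    push_cast
    exact tendsto_neg_atTop_atBot.comp tendsto_natCast_atTop_atTop
  simp_rw [hsum]
  simpa using tendsto_const_nhds.add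
    ((tendsto_integral_osc hT t h hA).sub (tendsto_integral_osc hT t h hB))

/-- For T > 0, E with Im E < 0, and 0 < t < T, the (symmetric) sum over
k ∈ ℤ of e^{-iη_k t}/(η_k - E) equals -iT e^{-iEt}/(1 + e^{-iET}). -/
theorem matsubara_sum (T : ℝ) (hT : 0 < T) (E : ℂ) (hE : E.im < 0)
    (t : ℝ) (ht0 : 0 < t) (htT : t < T) :
    Tendsto
      (fun N : ℕ => ∑ k ∈ Finset.Icc (-(N : ℤ)) (N : ℤ),
        Complex.exp (-(Complex.I * (eta T k : ℂ) * (t : ℂ))) / ((eta T k : ℂ) - E))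
      atTop
      (nhds (-Complex.I * (T : ℂ) * Complex.exp (-(Complex.I * E * (t : ℂ)))
        / (1 + Complex.exp (-(Complex.I * E * (T : ℂ)))))) := by
  have hTc : (T : ℂ) ≠ 0 := by exact_mod_cast hT.ne'
  -- `|exp (-iET)| = exp (T Im E) < 1`, so the denominator does not vanish.
  have hden : 1 + Complex.exp (-(Complex.I * E * (T : ℂ))) ≠ 0 := by
    intro h0
    have h1 : ‖Complex.exp (-(Complex.I * E * (T : ℂ)))‖ = 1 := by
      rw [eq_neg_of_add_eq_zero_right h0]
      simp
    rw [Complex.norm_exp, Real.exp_eq_one_iff] at h1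
    simp at h1
    rcases h1 with h1 | h1 <;> linarith
  have hne : ∀ k, (eta T k : ℂ) - E ≠ 0 := by
    intro k h0
    have := congrArg Complex.im h0
    simp at this
    linarith
  -- The half-integer shift of the frequencies is absorbed into the function being expanded.
  set φ : ℝ → ℂ := fun s => Complex.exp (Complex.I * (π / T - E) * s) with hφ
  have hφd : Differentiable ℝ φ := by
    intro s
    simp only [hφ]
    fun_prop
  set D := 1 + Complex.exp (-(Complex.I * E * (T : ℂ))) with hD
  set K : ℂ := -Complex.I / D * Complex.exp (-(Complex.I * (π / T) * t)) with hK
  have hcoef : ∀ k : ℤ, Complex.exp (-(Complex.I * (eta T k : ℂ) * (t : ℂ))) /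
      ((eta T k : ℂ) - E) = K * ∫ s in (0 : ℝ)..T, osc T t k s * φ s := by
    intro k
    have heta : (eta T k : ℂ) = π / T * (2 * k + 1) := by simp [eta]
    have h1 : ∀ s : ℝ, osc T t k s * φ s =
        Complex.exp (-(k * (2 * π * Complex.I / T) * t)) *
          Complex.exp (Complex.I * (eta T k - E) * s) := by
      intro s
      rw [osc, hφ, ← Complex.exp_add, ← Complex.exp_add, heta]
      ring_nf
    have h2 : Complex.exp (Complex.I * (eta T k - E) * T) = 1 - D := by
      have h3 : Complex.I * (eta T k - E) * T =
          -(Complex.I * E * T) + (π * Complex.I + k * (2 * π * Complex.I)) := by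
        rw [heta]
        field_simp
        ring
      rw [h3, Complex.exp_add, Complex.exp_add, Complex.exp_pi_mul_I,
        Complex.exp_int_mul_two_pi_mul_I, hD]
      ring
    have h4 : Complex.exp (-(Complex.I * (eta T k : ℂ) * (t : ℂ))) =
        Complex.exp (-(Complex.I * (π / T) * t)) *
          Complex.exp (-(k * (2 * π * Complex.I / T) * t)) := by
      rw [← Complex.exp_add, heta]
      ring_nf
    simp_rw [h1]
    rw [intervalIntegral.integral_const_mul,
      integral_exp_mul_complex (mul_ne_zero Complex.I_ne_zero (hne k)), h2, h4, hK]
    have := hne k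
    have := Complex.I_ne_zero
    simp only [Complex.ofReal_zero, mul_zero, Complex.exp_zero]
    field_simp
    ring
  have hlim : -Complex.I * (T : ℂ) * Complex.exp (-(Complex.I * E * (t : ℂ))) / D =
      K * (T * φ t) := by
    have h1 : Complex.exp (-(Complex.I * E * (t : ℂ))) =
        Complex.exp (-(Complex.I * (π / T) * t)) * φ t := by
      rw [hφ, ← Complex.exp_add]
      ring_nf
    rw [h1, hK]
    ring
  simp_rw [hcoef, ← Finset.mul_sum]
  rw [hlim]
  exact (tendsto_fourier_partial_sum hT ⟨ht0, htT⟩ hφd).const_mul K
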